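/- Let m, n be positive integers, let E ⊂ ℝⁿ be finite, and let f : E → [0,∞). Then there is a constant C depending only on m and n such that the family Γ⃗'_f = (Γ'_f(x,M))_{x∈E,M>0} is a (C,1)-convex shape field: each Γ'_f(x,M) is convex; Γ'_f(x,M') ⊆ Γ'_f(x,M) for 0 < M' ≤ M; and whenever 0 < δ ≤ 1, x ∈ E, M > 0, P₁, P₂ ∈ Γ'_f(x,M) satisfy |∂^β(P₁−P₂)(x)| ≤ Mδ^{m−|β|} for |β| ≤ m−1, and Q₁, Q₂ ∈ 𝒫 satisfy |∂^β Q_i(x)| ≤ δ^{−|β|} for |β| ≤ m−1 (i = 1, 2) and Q₁⊙_x Q₁ + Q₂⊙_x Q₂ = 1, then Q₁⊙_x Q₁⊙_x P₁ + Q₂⊙_x Q₂⊙_x P₂ ∈ Γ'_f(x, CM). -/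

import Mathlib

open scoped BigOperators

noncomputable section

abbrev Euc (n : ℕ) : Type := EuclideanSpace ℝ (Fin n)
abbrev MPoly (n : ℕ) : Type := MvPolynomial (Fin n) ℝ

/-- Partial derivative in the `i`-th coordinate direction. -/
noncomputable def pD {n : ℕ} (i : Fin n) (F : Euc n → ℝ) : Euc n → ℝ :=
  fun x => fderiv ℝ F x (EuclideanSpace.single i (1 : ℝ))

/-- The multi-index partial derivative `∂^α F`. -/
noncomputable def mD {n : ℕ} (α : Fin n → ℕ) (F : Euc n → ℝ) : Euc n → ℝ :=
  (((List.finRange n).flatMap fun i => List.replicate (α i) i)).foldr pD F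

/-- Partial derivative within a set. -/
noncomputable def pDW {n : ℕ} (s : Set (Euc n)) (i : Fin n) (F : Euc n → ℝ) : Euc n → ℝ :=
  fun x => fderivWithin ℝ F s x (EuclideanSpace.single i (1 : ℝ))

/-- Multi-index partial derivative within a set. -/
noncomputable def mDW {n : ℕ} (s : Set (Euc n)) (α : Fin n → ℕ) (F : Euc n → ℝ) : Euc n → ℝ :=
  (((List.finRange n).flatMap fun i => List.replicate (α i) i)).foldr (pDW s) F

/-- The order `|α|` of a multi-index. -/
def deg {n : ℕ} (α : Fin n → ℕ) : ℕ := ∑ i, α i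

/-- Evaluation of an `n`-variable polynomial at a point of `ℝⁿ`. -/
noncomputable def peval {n : ℕ} (P : MPoly n) (x : Euc n) : ℝ :=
  MvPolynomial.eval (fun i => x i) P

/-- `F ∈ C^m(ℝⁿ)` with `‖F‖_{C^m(ℝⁿ)} ≤ M`. -/
def CmNormLe (m n : ℕ) (F : Euc n → ℝ) (M : ℝ) : Prop :=
  ContDiff ℝ (m : ℕ∞) F ∧ ∀ α : Fin n → ℕ, deg α ≤ m → ∀ x : Euc n, |mD α F x| ≤ M

/-- `F ∈ C^{m-1,1}(ℝⁿ)` with `‖F‖_{C^{m-1,1}(ℝⁿ)} ≤ M`. -/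
def CmLipNormLe (m n : ℕ) (F : Euc n → ℝ) (M : ℝ) : Prop :=
  ContDiff ℝ ((m - 1 : ℕ) : ℕ∞) F ∧
  (∀ α : Fin n → ℕ, deg α ≤ m - 1 → ∀ x : Euc n, |mD α F x| ≤ M) ∧
  (∀ α : Fin n → ℕ, deg α = m - 1 → ∀ i : Fin n, ∀ x : Euc n, ∀ t : ℝ,
    |mD α F (x + t • EuclideanSpace.single i (1 : ℝ)) - mD α F x| ≤ M * |t|)

/-- `J_x(F) = P`, i.e. `P` is the `(m-1)`-st order Taylor polynomial of `F` at `x`. -/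
def IsJetAt (m n : ℕ) (F : Euc n → ℝ) (x : Euc n) (P : MPoly n) : Prop :=
  P.totalDegree ≤ m - 1 ∧
  ∀ α : Fin n → ℕ, deg α ≤ m - 1 → mD α (peval P) x = mD α F x

/-- `J_x^+(F) = P`, i.e. `P` is the `m`-th order Taylor polynomial of `F` at `x`. -/
def IsJetPlusAt (m n : ℕ) (F : Euc n → ℝ) (x : Euc n) (P : MPoly n) : Prop :=
  P.totalDegree ≤ m ∧
  ∀ α : Fin n → ℕ, deg α ≤ m → mD α (peval P) x = mD α F x

/-- Truncation of a polynomial: keep the monomials of total degree `≤ d`. -/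
noncomputable def truncLE {n : ℕ} (d : ℕ) (P : MPoly n) : MPoly n :=
  ∑ s ∈ P.support.filter (fun s => (s.sum fun _ e => e) ≤ d),
    MvPolynomial.monomial s (P.coeff s)

/-- Substitution `y ↦ y + v` in a polynomial. -/
noncomputable def polyShift {n : ℕ} (v : Fin n → ℝ) (P : MPoly n) : MPoly n :=
  MvPolynomial.aeval (fun i => (MvPolynomial.X i + MvPolynomial.C (v i) : MPoly n)) P

/-- The `(m-1)`-st order Taylor polynomial of a polynomial `P` at `x`. -/
noncomputable def jetTrunc (m n : ℕ) (x : Euc n) (P : MPoly n) : MPoly n :=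
  polyShift (fun i => -(x i)) (truncLE (m - 1) (polyShift (fun i => x i) P))

/-- Multiplication of `(m-1)`-jets at `x`: `P ⊙_x Q = J_x(PQ)`. -/
noncomputable def jmul (m n : ℕ) (x : Euc n) (P Q : MPoly n) : MPoly n :=
  jetTrunc m n x (P * Q)

/-- `Γ*(x,M)`. -/
def GammaStar (m n : ℕ) (x : Euc n) (M : ℝ) : Set (MPoly n) :=
  {P | ∃ F : Euc n → ℝ, CmNormLe m n F M ∧ (∀ y, 0 ≤ F y) ∧ IsJetAt m n F x P}

/-- `Γ_f(x,M)`. -/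
def GammaF (m n : ℕ) (f : Euc n → ℝ) (x : Euc n) (M : ℝ) : Set (MPoly n) :=
  {P ∈ GammaStar m n x M | peval P x = f x}

/-- `Γ'*(x,M)` (the `C^{m-1,1}` version). -/
def GammaStar' (m n : ℕ) (x : Euc n) (M : ℝ) : Set (MPoly n) :=
  {P | ∃ F : Euc n → ℝ, CmLipNormLe m n F M ∧ (∀ y, 0 ≤ F y) ∧ IsJetAt m n F x P}

/-- `Γ'_f(x,M)`. -/
def GammaF' (m n : ℕ) (f : Euc n → ℝ) (x : Euc n) (M : ℝ) : Set (MPoly n) :=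
  {P ∈ GammaStar' m n x M | peval P x = f x}

/-- `Γ₀⁺`. -/
def Gamma0plus (m n : ℕ) : Set (MPoly n) :=
  {P | P.totalDegree ≤ m ∧
    (∀ β : Fin n → ℕ, deg β ≤ m → |mD β (peval P) 0| ≤ 1) ∧
    (∀ x : Euc n, 0 ≤ peval P x + ‖x‖ ^ m) ∧
    (∀ ε : ℝ, 0 < ε → ∃ δ : ℝ, 0 < δ ∧ ∀ x : Euc n, ‖x‖ ≤ δ → 0 ≤ peval P x + ε * ‖x‖ ^ m)}

/-- `Γ̃₀'`. -/
def GammaTilde0' (m n : ℕ) : Set (MPoly n) :=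
  {P | P.totalDegree ≤ m - 1 ∧
    (∀ β : Fin n → ℕ, deg β ≤ m - 1 → |mD β (peval P) 0| ≤ 1) ∧
    ∀ x : Euc n, 0 ≤ peval P x + ‖x‖ ^ m}

/-- The closed axis-parallel cube with center `c` and sidelength `δ`. -/
def cube {n : ℕ} (c : Euc n) (δ : ℝ) : Set (Euc n) :=
  {y | ∀ i, |y i - c i| ≤ δ / 2}

/-- `F ∈ C^{m-1,1}(Q)` with `‖F‖_{C^{m-1,1}(Q)} ≤ M`, for the cube `Q` of center `c`,
sidelength `δ`. -/
def CmLipOnCubeLe (m n : ℕ) (c : Euc n) (δ : ℝ) (F : Euc n → ℝ) (M : ℝ) : Prop :=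
  ContDiffOn ℝ ((m - 1 : ℕ) : ℕ∞) F (cube c δ) ∧
  (∀ α : Fin n → ℕ, deg α ≤ m - 1 → ∀ x ∈ cube c δ, |mDW (cube c δ) α F x| ≤ M) ∧
  (∀ α : Fin n → ℕ, deg α = m - 1 → ∀ i : Fin n, ∀ x ∈ cube c δ, ∀ t : ℝ,
    x + t • EuclideanSpace.single i (1 : ℝ) ∈ cube c δ →
    |mDW (cube c δ) α F (x + t • EuclideanSpace.single i (1 : ℝ)) - mDW (cube c δ) α F x|
      ≤ M * |t|)

/-! ### Infrastructure: iterated partial derivatives versus `iteratedFDeriv` -/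

lemma sf_pD_contDiff {n k : ℕ} (i : Fin n) {F : Euc n → ℝ}
    (hF : ContDiff ℝ ((k + 1 : ℕ) : WithTop ℕ∞) F) : ContDiff ℝ (k : WithTop ℕ∞) (pD i F) := by
  have h1 : ContDiff ℝ (k : WithTop ℕ∞) (fderiv ℝ F) :=
    hF.fderiv_right (by norm_cast)
  exact h1.clm_apply contDiff_const

lemma sf_foldr_contDiff {n : ℕ} (l : List (Fin n)) : ∀ (k : ℕ) {F : Euc n → ℝ},
    ContDiff ℝ ((l.length + k : ℕ) : WithTop ℕ∞) F →
    ContDiff ℝ (k : WithTop ℕ∞) (l.foldr pD F) := by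
  induction l with
  | nil => intro k F h; simpa using h
  | cons a l ih =>
    intro k F h
    simp only [List.foldr_cons]
    apply sf_pD_contDiff
    apply ih
    convert h using 2
    simp only [List.length_cons]; ring

lemma sf_pD_comm {n : ℕ} (i j : Fin n) {F : Euc n → ℝ} (hF : ContDiff ℝ ((2 : ℕ) : WithTop ℕ∞) F) :
    pD i (pD j F) = pD j (pD i F) := by
  have h1 : ContDiff ℝ ((1 : ℕ) : WithTop ℕ∞) (fderiv ℝ F) :=
    hF.fderiv_right (by norm_cast)
  have hd : Differentiable ℝ (fderiv ℝ F) := h1.differentiable (by simp)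
  have key : ∀ (a b : Fin n) (x : Euc n), pD a (pD b F) x =
      (fderiv ℝ (fderiv ℝ F) x (EuclideanSpace.single a (1 : ℝ))) (EuclideanSpace.single b (1 : ℝ)) := by
    intro a b x
    unfold pD
    rw [fderiv_clm_apply (hd x) (differentiableAt_const _)]
    simp
  funext x
  rw [key, key]
  have hs : IsSymmSndFDerivAt ℝ F x :=
    hF.contDiffAt.isSymmSndFDerivAt (by simp)
  exact hs.eq _ _

lemma sf_foldr_perm {n : ℕ} {l₁ l₂ : List (Fin n)} (h : l₁.Perm l₂) {F : Euc n → ℝ}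
    (hF : ContDiff ℝ (l₁.length : WithTop ℕ∞) F) : l₁.foldr pD F = l₂.foldr pD F := by
  induction h with
  | nil => rfl
  | cons a h ih =>
    simp only [List.foldr_cons]
    rw [ih (hF.of_le (by simp only [List.length_cons]; norm_cast; omega))]
  | swap a b l =>
    simp only [List.foldr_cons]
    apply sf_pD_comm
    apply sf_foldr_contDiff
    exact hF
  | trans h1 h2 ih1 ih2 =>
    rw [ih1 hF, ih2 (by rw [← h1.length_eq]; exact hF)]

lemma sf_foldr_eq {n : ℕ} (l : List (Fin n)) : ∀ {F : Euc n → ℝ} (_ : ContDiff ℝ (l.length : WithTop ℕ∞) F)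
    (x : Euc n), l.foldr pD F x =
      iteratedFDeriv ℝ l.length F x (fun j => EuclideanSpace.single (l.get j) (1 : ℝ)) := by
  induction l with
  | nil => intro F h x; simp
  | cons a l ih =>
    intro F h x
    have hl : ContDiff ℝ (l.length : WithTop ℕ∞) F :=
      h.of_le (by simp only [List.length_cons]; norm_cast; omega)
    have hd : Differentiable ℝ (iteratedFDeriv ℝ l.length F) :=
      h.differentiable_iteratedFDeriv (by simp only [List.length_cons]; norm_cast; omega)
    simp only [List.foldr_cons]
    have e1 : l.foldr pD F = fun y =>
      iteratedFDeriv ℝ l.length F y (fun j => EuclideanSpace.single (l.get j) (1 : ℝ)) :=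
      funext (ih hl)
    rw [e1]
    have e2 := iteratedFDeriv_succ_apply_left (𝕜 := ℝ) (f := F) (x := x) (n := l.length)
      (fun j => EuclideanSpace.single ((a :: l).get j) (1 : ℝ))
    refine Eq.trans ?_ e2.symm
    have e3 : HasFDerivAt (fun y => iteratedFDeriv ℝ l.length F y (fun j => EuclideanSpace.single (l.get j) (1 : ℝ)))
      ((ContinuousMultilinearMap.apply ℝ (fun _ : Fin l.length => Euc n) ℝ
        (fun j => EuclideanSpace.single (l.get j) (1 : ℝ))).comp
        (fderiv ℝ (iteratedFDeriv ℝ l.length F) x)) x :=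
      (ContinuousMultilinearMap.apply ℝ (fun _ : Fin l.length => Euc n) ℝ
        (fun j => EuclideanSpace.single (l.get j) (1 : ℝ))).hasFDerivAt.comp x (hd x).hasFDerivAt
    unfold pD
    rw [e3.fderiv]
    rfl

/-- the sorted list of a multi-index -/
def sfList {n : ℕ} (α : Fin n → ℕ) : List (Fin n) :=
  (List.finRange n).flatMap fun i => List.replicate (α i) i

lemma sfList_length {n : ℕ} (α : Fin n → ℕ) : (sfList α).length = deg α := by
  simp [sfList, deg, List.length_flatMap, Fin.sum_univ_def]

lemma sfList_count {n : ℕ} (α : Fin n → ℕ) (i : Fin n) : (sfList α).count i = α i := by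
  simp only [sfList, List.count_flatMap]
  have : (List.count i ∘ fun j => List.replicate (α j) j) = fun j => if j = i then α j else 0 := by
    funext j; simp [List.count_replicate]
  rw [this, ← Fin.sum_univ_def]
  simp

lemma sf_mD_eq {n : ℕ} {α : Fin n → ℕ} {F : Euc n → ℝ} {N : ℕ}
    (hF : ContDiff ℝ (N : WithTop ℕ∞) F) (h : deg α ≤ N) (x : Euc n) :
    mD α F x = iteratedFDeriv ℝ (sfList α).length F x
      (fun j => EuclideanSpace.single ((sfList α).get j) (1 : ℝ)) := by
  refine sf_foldr_eq (sfList α) (hF.of_le ?_) x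
  rw [sfList_length]; exact_mod_cast h

lemma sf_mD_zero {n : ℕ} (F : Euc n → ℝ) : mD (fun _ => 0) F = F := by
  have : sfList (fun _ : Fin n => 0) = [] := by
    apply List.eq_nil_of_length_eq_zero
    rw [sfList_length]; simp [deg]
  change (sfList (fun _ : Fin n => 0)).foldr pD F = F
  rw [this]; rfl

lemma sf_deg_zero {n : ℕ} : deg (fun _ : Fin n => 0) = 0 := by
  simp [deg]

lemma sf_mD_add {n : ℕ} {α : Fin n → ℕ} {F G : Euc n → ℝ} {N : ℕ}
    (hF : ContDiff ℝ (N : WithTop ℕ∞) F) (hG : ContDiff ℝ (N : WithTop ℕ∞) G) (h : deg α ≤ N)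
    (x : Euc n) : mD α (fun y => F y + G y) x = mD α F x + mD α G x := by
  rw [sf_mD_eq (hF.add hG) h, sf_mD_eq hF h, sf_mD_eq hG h]
  have hl : ((sfList α).length : WithTop ℕ∞) ≤ N := by rw [sfList_length]; exact_mod_cast h
  have := iteratedFDeriv_add_apply (x := x) (hF.of_le hl).contDiffAt (hG.of_le hl).contDiffAt
  rw [show (fun y => F y + G y) = F + G from rfl, this]; rfl

lemma sf_mD_smul {n : ℕ} {α : Fin n → ℕ} {F : Euc n → ℝ} {N : ℕ} (c : ℝ)
    (hF : ContDiff ℝ (N : WithTop ℕ∞) F) (h : deg α ≤ N)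
    (x : Euc n) : mD α (fun y => c * F y) x = c * mD α F x := by
  rw [sf_mD_eq (contDiff_const.mul hF) h, sf_mD_eq hF h]
  have hl : ((sfList α).length : WithTop ℕ∞) ≤ N := by rw [sfList_length]; exact_mod_cast h
  have := iteratedFDeriv_const_smul_apply (a := c) (x := x) (hF.of_le hl).contDiffAt
  rw [show (fun y => c * F y) = c • F from rfl, this]; rfl

lemma sf_mD_sub {n : ℕ} {α : Fin n → ℕ} {F G : Euc n → ℝ} {N : ℕ}
    (hF : ContDiff ℝ (N : WithTop ℕ∞) F) (hG : ContDiff ℝ (N : WithTop ℕ∞) G) (h : deg α ≤ N)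
    (x : Euc n) : mD α (fun y => F y - G y) x = mD α F x - mD α G x := by
  have := sf_mD_add hF (contDiff_const.mul hG : ContDiff ℝ (N : WithTop ℕ∞) (fun y => (-1 : ℝ) * G y)) h x
  rw [sf_mD_smul (-1) hG h x] at this
  rw [show (fun y => F y - G y) = (fun y => F y + (-1) * G y) from by funext y; ring, this]
  ring

lemma sf_mD_le {n : ℕ} {α : Fin n → ℕ} {F : Euc n → ℝ} {N : ℕ}
    (hF : ContDiff ℝ (N : WithTop ℕ∞) F) (h : deg α ≤ N) (x : Euc n) :
    |mD α F x| ≤ ‖iteratedFDeriv ℝ (deg α) F x‖ := by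
  rw [sf_mD_eq hF h, ← sfList_length α]
  have := (iteratedFDeriv ℝ (sfList α).length F x).le_opNorm
    (fun j => EuclideanSpace.single ((sfList α).get j) (1 : ℝ))
  simpa using this

lemma sf_mD_sub_le {n : ℕ} {α : Fin n → ℕ} {F : Euc n → ℝ} {N : ℕ}
    (hF : ContDiff ℝ (N : WithTop ℕ∞) F) (h : deg α ≤ N) (x y : Euc n) :
    |mD α F x - mD α F y| ≤ ‖iteratedFDeriv ℝ (deg α) F x - iteratedFDeriv ℝ (deg α) F y‖ := by
  rw [sf_mD_eq hF h, sf_mD_eq hF h, ← sfList_length α]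
  have := (iteratedFDeriv ℝ (sfList α).length F x - iteratedFDeriv ℝ (sfList α).length F y).le_opNorm
    (fun j => EuclideanSpace.single ((sfList α).get j) (1 : ℝ))
  simpa using this

/-- values of `iteratedFDeriv` at basis tuples are mixed partials -/
lemma sf_basis {n k : ℕ} (r : Fin k → Fin n) : ∃ α : Fin n → ℕ, deg α = k ∧
    ∀ {F : Euc n → ℝ}, ContDiff ℝ (k : WithTop ℕ∞) F → ∀ x,
      iteratedFDeriv ℝ k F x (fun j => EuclideanSpace.single (r j) (1 : ℝ)) = mD α F x := by
  have hp : (List.ofFn r).Perm (sfList fun i => (List.ofFn r).count i) := by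
    rw [List.perm_iff_count]
    intro a; rw [sfList_count]
  refine ⟨fun i => (List.ofFn r).count i, ?_, ?_⟩
  · rw [← sfList_length, ← hp.length_eq]; simp
  · intro F hF x
    have h1 := sf_foldr_perm hp (F := F) (by simpa using hF)
    have h2 := sf_foldr_eq (List.ofFn r) (F := F) (by simpa using hF) x
    unfold mD
    change _ = List.foldr pD F (sfList fun i => (List.ofFn r).count i) x
    rw [← h1, h2]
    have : ∀ (k' : ℕ) (h : k' = k) , iteratedFDeriv ℝ k F x (fun j => EuclideanSpace.single (r j) (1 : ℝ))
      = iteratedFDeriv ℝ k' F x (fun j => EuclideanSpace.single (r (Fin.cast h j)) (1 : ℝ)) := by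
      rintro k' rfl; rfl
    rw [this _ (List.length_ofFn)]
    congr 1
    funext j
    simp only [List.get_ofFn]

lemma sf_opNorm_le {n k : ℕ} (T : ContinuousMultilinearMap ℝ (fun _ : Fin k => Euc n) ℝ) {K : ℝ}
    (hK : 0 ≤ K)
    (h : ∀ r : Fin k → Fin n, |T (fun j => EuclideanSpace.single (r j) (1 : ℝ))| ≤ K) :
    ‖T‖ ≤ (n : ℝ) ^ k * K := by
  apply ContinuousMultilinearMap.opNorm_le_bound (by positivity)
  intro v
  have hv : v = fun j => ∑ i, (v j i) • (EuclideanSpace.single i (1 : ℝ) : Euc n) := by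
    funext j
    ext l
    simp [Finset.sum_apply, Pi.single_apply]
  have h1 : T v = ∑ r : Fin k → Fin n, (∏ j, v j (r j)) • T (fun j => EuclideanSpace.single (r j) (1 : ℝ)) := by
    conv_lhs => rw [hv]
    have := T.toMultilinearMap.map_sum (fun j i => (v j i) • (EuclideanSpace.single i (1 : ℝ) : Euc n))
    refine this.trans ?_
    refine Finset.sum_congr rfl fun r _ => ?_
    exact T.toMultilinearMap.map_smul_univ (fun j => v j (r j)) _
  rw [h1]
  refine (norm_sum_le _ _).trans ?_
  have h2 : ∀ r ∈ (Finset.univ : Finset (Fin k → Fin n)),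
      ‖(∏ j, v j (r j)) • T (fun j => EuclideanSpace.single (r j) (1 : ℝ))‖ ≤ K * ∏ j, ‖v j‖ := by
    intro r _
    rw [norm_smul, mul_comm]
    refine mul_le_mul (h r) ?_ (norm_nonneg _) hK
    rw [norm_prod]
    exact Finset.prod_le_prod (fun _ _ => norm_nonneg _) (fun j _ => PiLp.norm_apply_le (v j) (r j))
  refine (Finset.sum_le_sum h2).trans ?_
  simp [mul_assoc]

lemma sf_lip {n : ℕ} {g : Euc n → ℝ} {M : ℝ} (hM : 0 ≤ M)
    (h : ∀ i : Fin n, ∀ x : Euc n, ∀ t : ℝ,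
      |g (x + t • EuclideanSpace.single i (1 : ℝ)) - g x| ≤ M * |t|) (y z : Euc n) :
    |g z - g y| ≤ n * M * ‖z - y‖ := by
  have key : ∀ (s : Finset (Fin n)) (t : Fin n → ℝ),
      |g (y + ∑ i ∈ s, t i • EuclideanSpace.single i (1 : ℝ)) - g y| ≤ ∑ i ∈ s, M * |t i| := by
    intro s t
    induction s using Finset.induction_on with
    | empty => simp
    | insert a s ha ih =>
      rw [Finset.sum_insert ha, Finset.sum_insert ha]
      have := h a (y + ∑ i ∈ s, t i • EuclideanSpace.single i (1 : ℝ)) (t a)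
      rw [add_assoc, add_comm (∑ i ∈ s, _)] at this
      calc _ ≤ _ := abs_sub_le _ (g (y + ∑ i ∈ s, t i • EuclideanSpace.single i (1 : ℝ))) _
        _ ≤ _ := add_le_add this ih
  have h1 := key Finset.univ (fun i => (z - y) i)
  have hv : y + ∑ i, ((z - y) i) • (EuclideanSpace.single i (1 : ℝ) : Euc n) = z := by
    ext l
    simp [Finset.sum_apply, Pi.single_apply]
  rw [hv] at h1
  refine h1.trans ?_
  calc ∑ i, M * |(z - y) i| ≤ ∑ i : Fin n, M * ‖z - y‖ := by
        refine Finset.sum_le_sum fun i _ => mul_le_mul_of_nonneg_left ?_ hM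
        exact PiLp.norm_apply_le (z - y) i
    _ = _ := by simp [mul_assoc]

/-! ### Polynomials as functions -/

lemma sf_peval_contDiff {n : ℕ} (P : MPoly n) {N : WithTop ℕ∞} : ContDiff ℝ N (peval P) := by
  induction P using MvPolynomial.induction_on with
  | C a =>
    have : peval (MvPolynomial.C a : MPoly n) = fun _ => a := by funext y; simp [peval]
    rw [this]; exact contDiff_const
  | add p q hp hq =>
    have : peval (p + q) = fun y => peval p y + peval q y := by funext y; simp [peval]
    rw [this]; exact hp.add hq
  | mul_X p i hp =>
    have : peval (p * MvPolynomial.X i) = fun y => peval p y * y i := by funext y; simp [peval]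
    rw [this]; exact hp.mul (EuclideanSpace.proj (𝕜 := ℝ) i).contDiff

lemma sf_peval_add {n : ℕ} (P Q : MPoly n) (y : Euc n) : peval (P + Q) y = peval P y + peval Q y := by
  simp [peval]
lemma sf_peval_sub {n : ℕ} (P Q : MPoly n) (y : Euc n) : peval (P - Q) y = peval P y - peval Q y := by
  simp [peval]
lemma sf_peval_mul {n : ℕ} (P Q : MPoly n) (y : Euc n) : peval (P * Q) y = peval P y * peval Q y := by
  simp [peval]
lemma sf_peval_one {n : ℕ} (y : Euc n) : peval (1 : MPoly n) y = 1 := by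
  simp [peval]

lemma sf_peval_shift {n : ℕ} (v : Euc n) (P : MPoly n) (y : Euc n) :
    peval (polyShift (fun i => v i) P) y = peval P (y + v) := by
  unfold peval polyShift
  induction P using MvPolynomial.induction_on with
  | C a => simp
  | add p q hp hq => rw [map_add, map_add, map_add, hp, hq]
  | mul_X p i hp =>
    rw [map_mul, map_mul, map_mul, hp]
    simp

lemma sf_peval_monomial {n : ℕ} (s : Fin n →₀ ℕ) (c : ℝ) (y : Euc n) :
    peval (MvPolynomial.monomial s c) y = c * ∏ i, (y i) ^ (s i) := by
  simp [peval, MvPolynomial.eval_monomial, Finsupp.prod_fintype]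

lemma sf_finsupp_deg {n : ℕ} (s : Fin n →₀ ℕ) : (s.sum fun _ e => e) = ∑ i, s i := by
  simp [Finsupp.sum_fintype]

lemma sf_generic {n : ℕ} (T : ℕ → (Euc n → ℝ) → Prop) (u : Fin n → Euc n → ℝ)
    (h0 : ∀ c : ℝ, T 0 (fun _ => c))
    (hm : ∀ a b F G, T a F → T b G → T (a + b) (fun y => F y * G y))
    (h1 : ∀ i, T 1 (u i)) (s : Fin n → ℕ) (c : ℝ) :
    T (∑ i, s i) (fun y => c * ∏ i, (u i y) ^ (s i)) := by
  have hp : ∀ i k, T k (fun y => (u i y) ^ k) := by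
    intro i k
    induction k with
    | zero => simpa using h0 1
    | succ k ih => simpa [pow_succ] using hm k 1 _ _ ih (h1 i)
  have hs : ∀ S : Finset (Fin n), T (∑ i ∈ S, s i) (fun y => ∏ i ∈ S, (u i y) ^ (s i)) := by
    intro S
    induction S using Finset.induction_on with
    | empty => simpa using h0 1
    | insert a S ha ih =>
      simp only [Finset.sum_insert ha, Finset.prod_insert ha]
      exact hm _ _ _ _ (hp a (s a)) ih
  simpa using hm 0 _ _ _ (h0 c) (hs Finset.univ)

lemma sf_proj_high {n : ℕ} (i : Fin n) (x : Euc n) (k : ℕ) (hk : 1 < k) (y : Euc n) :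
    iteratedFDeriv ℝ k (fun z : Euc n => z i - x i) y = 0 := by
  obtain ⟨k, rfl⟩ : ∃ j, k = j + 1 := ⟨k - 1, by omega⟩
  have hf : fderiv ℝ (fun z : Euc n => z i - x i) = fun _ => (EuclideanSpace.proj (𝕜 := ℝ) i : Euc n →L[ℝ] ℝ) := by
    funext z
    exact ((EuclideanSpace.proj (𝕜 := ℝ) i : Euc n →L[ℝ] ℝ).hasFDerivAt.sub_const (x i)).fderiv
  rw [← norm_eq_zero, ← norm_iteratedFDeriv_fderiv, hf, iteratedFDeriv_const_of_ne (by omega)]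
  simp

lemma sf_mul_zero {n N k : ℕ} {F G : Euc n → ℝ} (hF : ContDiff ℝ (N : WithTop ℕ∞) F)
    (hG : ContDiff ℝ (N : WithTop ℕ∞) G) (hk : k ≤ N) (x : Euc n)
    (h : ∀ i j, i + j = k → iteratedFDeriv ℝ i F x = 0 ∨ iteratedFDeriv ℝ j G x = 0) :
    iteratedFDeriv ℝ k (fun y => F y * G y) x = 0 := by
  have := norm_iteratedFDeriv_mul_le hF hG x (n := k) (by exact_mod_cast hk)
  rw [← norm_le_zero_iff]
  refine this.trans (le_of_eq (Finset.sum_eq_zero fun i hi => ?_))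
  rcases h i (k - i) (by have := Finset.mem_range.1 hi; omega) with h | h <;> simp [h]

/-- vanishing of order `d` at `x` -/
def sfVan {n : ℕ} (N d : ℕ) (x : Euc n) (F : Euc n → ℝ) : Prop :=
  ContDiff ℝ (N : WithTop ℕ∞) F ∧ ∀ k, k < d → k ≤ N → iteratedFDeriv ℝ k F x = 0

lemma sfVan.mul {n N a b : ℕ} {x : Euc n} {F G : Euc n → ℝ} (hF : sfVan N a x F) (hG : sfVan N b x G) :
    sfVan N (a + b) x (fun y => F y * G y) := by
  refine ⟨hF.1.mul hG.1, fun k hk hN => sf_mul_zero hF.1 hG.1 hN x fun i j hij => ?_⟩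
  by_cases h : i < a
  · exact Or.inl (hF.2 i h (by omega))
  · exact Or.inr (hG.2 j (by omega) (by omega))

lemma sfVan.mono {n N a b : ℕ} {x : Euc n} {F : Euc n → ℝ} (hF : sfVan N a x F) (h : b ≤ a) :
    sfVan N b x F := ⟨hF.1, fun k hk => hF.2 k (by omega)⟩

lemma sfVan.add {n N a : ℕ} {x : Euc n} {F G : Euc n → ℝ} (hF : sfVan N a x F) (hG : sfVan N a x G) :
    sfVan N a x (fun y => F y + G y) := by
  refine ⟨hF.1.add hG.1, fun k hk hN => ?_⟩
  have hl : (k : WithTop ℕ∞) ≤ N := by exact_mod_cast hN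
  have := iteratedFDeriv_add_apply (x := x) (hF.1.of_le hl).contDiffAt (hG.1.of_le hl).contDiffAt
  rw [show (fun y => F y + G y) = F + G from rfl, this, hF.2 k hk hN, hG.2 k hk hN, add_zero]

lemma sfVan.of_contDiff {n N : ℕ} {x : Euc n} {F : Euc n → ℝ} (hF : ContDiff ℝ (N : WithTop ℕ∞) F) :
    sfVan N 0 x F := ⟨hF, fun k hk => by omega⟩

lemma sfVan.mulr {n N a : ℕ} {x : Euc n} {F G : Euc n → ℝ} (hF : sfVan N a x F)
    (hG : ContDiff ℝ (N : WithTop ℕ∞) G) :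
    sfVan N a x (fun y => F y * G y) := hF.mul (sfVan.of_contDiff hG)

lemma sfVan.neg {n N a : ℕ} {x : Euc n} {F : Euc n → ℝ} (hF : sfVan N a x F) :
    sfVan N a x (fun y => - F y) := by
  have := hF.mulr (G := fun _ => -1) contDiff_const
  simpa using this

lemma sfVan.mD_eq {n N : ℕ} {x : Euc n} {F G : Euc n → ℝ} (hF : ContDiff ℝ (N : WithTop ℕ∞) F)
    (hG : ContDiff ℝ (N : WithTop ℕ∞) G) (h : sfVan N (N + 1) x (fun y => F y - G y))
    {α : Fin n → ℕ} (hα : deg α ≤ N) : mD α F x = mD α G x := by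
  have h1 := sf_mD_sub hF hG hα x
  have h2 := sf_mD_le h.1 hα x
  rw [h.2 _ (by omega) hα, h1] at h2
  simp only [norm_zero] at h2
  linarith [abs_nonpos_iff.1 h2]

lemma sfVan.of_mD_eq {n N : ℕ} {x : Euc n} {F G : Euc n → ℝ} (hF : ContDiff ℝ (N : WithTop ℕ∞) F)
    (hG : ContDiff ℝ (N : WithTop ℕ∞) G) (h : ∀ α : Fin n → ℕ, deg α ≤ N → mD α F x = mD α G x) :
    sfVan N (N + 1) x (fun y => F y - G y) := by
  refine ⟨hF.sub hG, fun k _ hk => ?_⟩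
  rw [← norm_le_zero_iff]
  have := sf_opNorm_le (iteratedFDeriv ℝ k (fun y => F y - G y) x) le_rfl (fun r => ?_)
  · simpa using this
  · obtain ⟨α, hα, hr⟩ := sf_basis r
    rw [hr ((hF.sub hG).of_le (by exact_mod_cast hk)), sf_mD_sub hF hG (by omega), h α (by omega)]
    simp

lemma sf_sum_zero {n k : ℕ} {ι : Type*} (S : Finset ι) (F : ι → Euc n → ℝ) (x : Euc n)
    (hF : ∀ s ∈ S, ContDiff ℝ (k : WithTop ℕ∞) (F s)) (h : ∀ s ∈ S, iteratedFDeriv ℝ k (F s) x = 0) :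
    iteratedFDeriv ℝ k (fun y => ∑ s ∈ S, F s y) x = 0 := by
  rw [iteratedFDeriv_fun_sum_apply (fun s hs => (hF s hs).contDiffAt)]
  exact Finset.sum_eq_zero h

lemma sf_poly_high {n d : ℕ} (P : MPoly n) (hP : P.totalDegree ≤ d) (k : ℕ) (hk : d < k) (y : Euc n) :
    iteratedFDeriv ℝ k (peval P) y = 0 := by
  have e : peval P = fun z => ∑ s ∈ P.support, P.coeff s * ∏ i, (z i) ^ (s i) := by
    funext z
    conv_lhs => rw [MvPolynomial.as_sum P]
    simp only [← sf_peval_monomial]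
    simp only [peval, map_sum]
  rw [e]
  have hpc : ∀ i : Fin n, ContDiff ℝ (k : WithTop ℕ∞) (fun z : Euc n => z i) :=
    fun i => (EuclideanSpace.proj (𝕜 := ℝ) i).contDiff
  apply sf_sum_zero
  · intro s _
    exact contDiff_const.mul (contDiff_prod fun i _ => (hpc i).pow _)
  · intro s hs
    have := sf_generic (n := n)
      (T := fun a F => ContDiff ℝ (k : WithTop ℕ∞) F ∧ ∀ j, a < j → j ≤ k → iteratedFDeriv ℝ j F y = 0)
      (u := fun i z => z i) ?_ ?_ ?_ s (P.coeff s)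
    · refine this.2 k ?_ le_rfl
      have := MvPolynomial.le_totalDegree hs
      rw [sf_finsupp_deg] at this
      omega
    · intro c
      refine ⟨contDiff_const, fun j hj _ => ?_⟩
      rw [iteratedFDeriv_const_of_ne (by omega)]; rfl
    · rintro a b F G ⟨hF, hF'⟩ ⟨hG, hG'⟩
      refine ⟨hF.mul hG, fun j hj hjk => sf_mul_zero hF hG hjk y fun p q hpq => ?_⟩
      by_cases h : a < p
      · exact Or.inl (hF' p h (by omega))
      · exact Or.inr (hG' q (by omega) (by omega))
    · intro i
      refine ⟨hpc i, fun j hj _ => ?_⟩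
      have := sf_proj_high i 0 j hj y
      simpa using this

lemma sf_monomial_van {n N : ℕ} (s : Fin n →₀ ℕ) (c : ℝ) (x : Euc n) :
    sfVan N (∑ i, s i) x (fun y => peval (MvPolynomial.monomial s c) (y - x)) := by
  simp only [sf_peval_monomial]
  refine sf_generic (n := n) (T := fun a F => sfVan N a x F) (u := fun i z => (z - x) i) ?_ ?_ ?_ s c
  · intro c; exact sfVan.of_contDiff contDiff_const
  · intro a b F G hF hG; exact hF.mul hG
  · intro i
    have hc : ContDiff ℝ (N : WithTop ℕ∞) (fun z : Euc n => (z - x) i) :=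
      (EuclideanSpace.proj (𝕜 := ℝ) i).contDiff.comp (contDiff_id.sub contDiff_const)
    refine ⟨hc, fun k hk _ => ?_⟩
    obtain rfl : k = 0 := by omega
    rw [← norm_eq_zero, norm_iteratedFDeriv_zero]
    simp

lemma sf_jetTrunc_van {m n : ℕ} (x : Euc n) (P : MPoly n) :
    sfVan (m - 1) (m - 1 + 1) x (fun y => peval P y - peval (jetTrunc m n x P) y) := by
  set R := polyShift (fun i => x i) P with hR
  have e : (fun y => peval P y - peval (jetTrunc m n x P) y) = fun y =>
      ∑ s ∈ R.support.filter (fun s => ¬ (s.sum fun _ e => e) ≤ m - 1),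
        peval (MvPolynomial.monomial s (R.coeff s)) (y - x) := by
    funext y
    have e1 : peval P y = peval R (y - x) := by
      rw [hR, sf_peval_shift]; simp
    have e2 : peval (jetTrunc m n x P) y = peval (truncLE (m - 1) R) (y - x) := by
      unfold jetTrunc
      have := sf_peval_shift (-x) (truncLE (m - 1) R) y
      rw [← sub_eq_add_neg] at this
      rw [← this]; rfl
    have e3 : R = truncLE (m - 1) R + ∑ s ∈ R.support.filter (fun s => ¬ (s.sum fun _ e => e) ≤ m - 1),
        MvPolynomial.monomial s (R.coeff s) := by
      unfold truncLE
      rw [Finset.sum_filter_add_sum_filter_not]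
      exact MvPolynomial.as_sum R
    rw [e1, e2]
    nth_rewrite 1 [e3]
    rw [sf_peval_add]
    simp [peval]
  rw [e]
  refine ⟨?_, fun k hk hN => ?_⟩
  · exact ContDiff.sum fun s _ => (sf_monomial_van s _ x).1
  · apply sf_sum_zero
    · intro s _; exact (sf_monomial_van s _ x).1
    · intro s hs
      refine (sf_monomial_van (N := m - 1) s _ x).2 k ?_ hN
      have := (Finset.mem_filter.1 hs).2
      rw [sf_finsupp_deg] at this
      omega

lemma sf_shift_deg {n : ℕ} (v : Fin n → ℝ) (P : MPoly n) :
    (polyShift v P).totalDegree ≤ P.totalDegree := by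
  unfold polyShift
  conv_lhs => rw [MvPolynomial.as_sum P]
  rw [map_sum]
  refine (MvPolynomial.totalDegree_finsetSum _ _).trans (Finset.sup_le fun s hs => ?_)
  refine le_trans ?_ (MvPolynomial.le_totalDegree hs)
  rw [sf_finsupp_deg, MvPolynomial.aeval_monomial]
  refine (MvPolynomial.totalDegree_mul _ _).trans ?_
  rw [MvPolynomial.algebraMap_eq, MvPolynomial.totalDegree_C, zero_add, Finsupp.prod_fintype _ _ (by simp)]
  refine (MvPolynomial.totalDegree_finsetProd _ _).trans (Finset.sum_le_sum fun i _ => ?_)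
  refine (MvPolynomial.totalDegree_pow _ _).trans ?_
  have : (MvPolynomial.X i + MvPolynomial.C (v i) : MPoly n).totalDegree ≤ 1 := by
    refine (MvPolynomial.totalDegree_add _ _).trans ?_
    simp
  nlinarith

lemma sf_jetTrunc_deg {m n : ℕ} (x : Euc n) (P : MPoly n) : (jetTrunc m n x P).totalDegree ≤ m - 1 := by
  unfold jetTrunc
  refine (sf_shift_deg _ _).trans ?_
  unfold truncLE
  refine (MvPolynomial.totalDegree_finsetSum _ _).trans (Finset.sup_le fun s hs => ?_)
  exact (MvPolynomial.totalDegree_monomial_le _ _).trans (Finset.mem_filter.1 hs).2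

/-! ### Quantitative estimates at scale `δ` on a ball -/

/-- Estimates at scale `δ` on the ball of radius `δ` around `x`. -/
def sfEst {n : ℕ} (N : ℕ) (x : Euc n) (δ : ℝ) (F : Euc n → ℝ) (K : ℝ) : Prop :=
  ContDiff ℝ (N : WithTop ℕ∞) F ∧
  (∀ k ≤ N, ∀ y ∈ Metric.closedBall x δ, ‖iteratedFDeriv ℝ k F y‖ * δ ^ k ≤ K) ∧
  (∀ y ∈ Metric.closedBall x δ, ∀ z ∈ Metric.closedBall x δ,
    ‖iteratedFDeriv ℝ N F z - iteratedFDeriv ℝ N F y‖ * δ ^ (N + 1) ≤ K * ‖z - y‖)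

lemma sf_mvt {n N k : ℕ} {x : Euc n} {δ C : ℝ} {F : Euc n → ℝ} (hF : ContDiff ℝ (N : WithTop ℕ∞) F)
    (hk : k < N) (h : ∀ y ∈ Metric.closedBall x δ, ‖iteratedFDeriv ℝ (k + 1) F y‖ ≤ C)
    {y z : Euc n} (hy : y ∈ Metric.closedBall x δ) (hz : z ∈ Metric.closedBall x δ) :
    ‖iteratedFDeriv ℝ k F z - iteratedFDeriv ℝ k F y‖ ≤ C * ‖z - y‖ := by
  have hd : Differentiable ℝ (iteratedFDeriv ℝ k F) :=
    hF.differentiable_iteratedFDeriv (by exact_mod_cast hk)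
  refine (convex_closedBall x δ).norm_image_sub_le_of_norm_fderiv_le (𝕜 := ℝ) (fun w _ => hd w)
    (fun w hw => ?_) hy hz
  rw [norm_fderiv_iteratedFDeriv]
  exact h w hw

lemma sfEst.nonneg {n N : ℕ} {x : Euc n} {δ K : ℝ} {F : Euc n → ℝ} (hδ : 0 < δ) (h : sfEst N x δ F K) :
    0 ≤ K := by
  have := h.2.1 0 (Nat.zero_le _) x (Metric.mem_closedBall_self hδ.le)
  exact le_trans (by positivity) this

lemma sfEst.lip {n N : ℕ} {x : Euc n} {δ K : ℝ} {F : Euc n → ℝ} (hδ : 0 < δ) (h : sfEst N x δ F K)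
    {k : ℕ} (hk : k ≤ N) {y z : Euc n} (hy : y ∈ Metric.closedBall x δ) (hz : z ∈ Metric.closedBall x δ) :
    ‖iteratedFDeriv ℝ k F z - iteratedFDeriv ℝ k F y‖ * δ ^ (k + 1) ≤ K * ‖z - y‖ := by
  rcases hk.lt_or_eq with hk | rfl
  · have h1 := sf_mvt (C := K / δ ^ (k + 1)) h.1 hk (fun w hw => by
      rw [le_div_iff₀ (by positivity)]; exact h.2.1 (k + 1) hk w hw) hy hz
    rw [← le_div_iff₀ (by positivity)]
    refine h1.trans (le_of_eq (by ring))
  · exact h.2.2 y hy z hz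

lemma sf_leibniz {n N k : ℕ} {δ a b : ℝ} {F G : Euc n → ℝ} (hδ : 0 < δ) (ha : 0 ≤ a) 
    (hF : ContDiff ℝ (N : WithTop ℕ∞) F) (hG : ContDiff ℝ (N : WithTop ℕ∞) G) (hk : k ≤ N) (y : Euc n)
    (h1 : ∀ i ≤ N, ‖iteratedFDeriv ℝ i F y‖ * δ ^ i ≤ a)
    (h2 : ∀ i ≤ N, ‖iteratedFDeriv ℝ i G y‖ * δ ^ i ≤ b) :
    ‖iteratedFDeriv ℝ k (fun z => F z * G z) y‖ * δ ^ k ≤ 2 ^ k * (a * b) := by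
  have h := norm_iteratedFDeriv_mul_le hF hG y (n := k) (by exact_mod_cast hk)
  refine (mul_le_mul_of_nonneg_right h (by positivity)).trans ?_
  rw [Finset.sum_mul]
  have : (2 : ℝ) ^ k * (a * b) = ∑ i ∈ Finset.range (k + 1), (k.choose i : ℝ) * (a * b) := by
    rw [← Finset.sum_mul]
    congr 1
    exact_mod_cast (Nat.sum_range_choose k).symm
  rw [this]
  refine Finset.sum_le_sum fun i hi => ?_
  have hi' : i ≤ k := by have := Finset.mem_range.1 hi; omega
  have e : δ ^ k = δ ^ i * δ ^ (k - i) := by rw [← pow_add]; congr 1; omega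
  rw [e]
  calc _ = (k.choose i : ℝ) * ((‖iteratedFDeriv ℝ i F y‖ * δ ^ i) *
        (‖iteratedFDeriv ℝ (k - i) G y‖ * δ ^ (k - i))) := by ring
    _ ≤ _ := by
      refine mul_le_mul_of_nonneg_left ?_ (by positivity)
      exact mul_le_mul (h1 i (by omega)) (h2 (k - i) (by omega)) (by positivity) ha

lemma sfEst.mono {n N : ℕ} {x : Euc n} {δ K K' : ℝ} {F : Euc n → ℝ} (h : sfEst N x δ F K) (hK : K ≤ K') :
    sfEst N x δ F K' :=
  ⟨h.1, fun k hk y hy => (h.2.1 k hk y hy).trans hK, fun y hy z hz => (h.2.2 y hy z hz).trans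
    (mul_le_mul_of_nonneg_right hK (norm_nonneg _))⟩

lemma sfEst.mul {n N : ℕ} {x : Euc n} {δ K₁ K₂ : ℝ} {F G : Euc n → ℝ} (hδ : 0 < δ)
    (hF : sfEst N x δ F K₁) (hG : sfEst N x δ G K₂) :
    sfEst N x δ (fun y => F y * G y) (2 ^ (N + 1) * (K₁ * K₂)) := by
  have k1 := hF.nonneg hδ
  have k2 := hG.nonneg hδ
  refine ⟨hF.1.mul hG.1, fun k hk y hy => ?_, fun y hy z hz => ?_⟩
  · refine (sf_leibniz hδ k1 hF.1 hG.1 hk y (fun i hi => hF.2.1 i hi y hy)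
      (fun i hi => hG.2.1 i hi y hy)).trans ?_
    refine mul_le_mul_of_nonneg_right ?_ (by positivity)
    exact pow_le_pow_right₀ (by norm_num) (by omega)
  · set h := z - y with hh
    have hyz : y + h = z := by rw [hh]; abel
    have sh : ContDiff ℝ (N : WithTop ℕ∞) (fun w : Euc n => w + h) := contDiff_id.add contDiff_const
    have cF : ContDiff ℝ (N : WithTop ℕ∞) (fun w => F (w + h)) := hF.1.comp sh
    have cG : ContDiff ℝ (N : WithTop ℕ∞) (fun w => G (w + h)) := hG.1.comp sh
    have cFG : ContDiff ℝ (N : WithTop ℕ∞) (fun w => F (w + h) * G (w + h)) := cF.mul cG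
    have cFG0 : ContDiff ℝ (N : WithTop ℕ∞) (fun w => F w * G w) := hF.1.mul hG.1
    have diff : ∀ {H : Euc n → ℝ}, ContDiff ℝ (N : WithTop ℕ∞) H → ∀ i ≤ N,
        iteratedFDeriv ℝ i (fun w => H (w + h) - H w) y = iteratedFDeriv ℝ i H z - iteratedFDeriv ℝ i H y := by
      intro H hH i hi
      have hl : (i : WithTop ℕ∞) ≤ N := by exact_mod_cast hi
      have := iteratedFDeriv_sub_apply (x := y) ((hH.comp sh).of_le hl).contDiffAt (hH.of_le hl).contDiffAt
      have e : (H ∘ (fun w => w + h)) - H = fun w => H (w + h) - H w := rfl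
      rw [e] at this
      rw [this]
      congr 1
      have := iteratedFDeriv_comp_add_right (𝕜 := ℝ) (f := H) i h y
      rw [hyz] at this
      exact this
    have e1 : iteratedFDeriv ℝ N (fun y => F y * G y) z - iteratedFDeriv ℝ N (fun y => F y * G y) y =
        iteratedFDeriv ℝ N (fun w => F (w + h) * (G (w + h) - G w)) y +
        iteratedFDeriv ℝ N (fun w => (F (w + h) - F w) * G w) y := by
      rw [← diff cFG0 N le_rfl]
      have := iteratedFDeriv_add_apply (x := y) (cF.mul (cG.sub hG.1)).contDiffAt
        ((cF.sub hF.1).mul hG.1).contDiffAt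
      rw [← this]
      congr 1
      funext w
      simp only [Pi.add_apply]
      ring
    rw [e1]
    have hlipF : ∀ i ≤ N, ‖iteratedFDeriv ℝ i (fun w => F (w + h) - F w) y‖ * δ ^ i ≤ K₁ * ‖h‖ / δ := by
      intro i hi
      rw [diff hF.1 i hi, le_div_iff₀ hδ, mul_assoc, ← pow_succ]
      exact hF.lip hδ hi hy hz
    have hlipG : ∀ i ≤ N, ‖iteratedFDeriv ℝ i (fun w => G (w + h) - G w) y‖ * δ ^ i ≤ K₂ * ‖h‖ / δ := by
      intro i hi
      rw [diff hG.1 i hi, le_div_iff₀ hδ, mul_assoc, ← pow_succ]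
      exact hG.lip hδ hi hy hz
    have t1 := sf_leibniz (a := K₁) (b := K₂ * ‖h‖ / δ) hδ k1 cF (cG.sub hG.1) le_rfl y
      (fun i hi => by
        have := iteratedFDeriv_comp_add_right (𝕜 := ℝ) (f := F) i h y
        rw [this, hyz]; exact hF.2.1 i hi z hz) hlipG
    have t2 := sf_leibniz (a := K₁ * ‖h‖ / δ) (b := K₂) hδ (by positivity) (cF.sub hF.1) hG.1 le_rfl y
      hlipF (fun i hi => hG.2.1 i hi y hy)
    have t3 := norm_add_le (iteratedFDeriv ℝ N (fun w => F (w + h) * (G (w + h) - G w)) y)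
        (iteratedFDeriv ℝ N (fun w => (F (w + h) - F w) * G w) y)
    calc _ ≤ (_ + _) * δ ^ (N + 1) := mul_le_mul_of_nonneg_right t3 (by positivity)
      _ = (‖iteratedFDeriv ℝ N (fun w => F (w + h) * (G (w + h) - G w)) y‖ * δ ^ N
          + ‖iteratedFDeriv ℝ N (fun w => (F (w + h) - F w) * G w) y‖ * δ ^ N) * δ := by ring
      _ ≤ (2 ^ N * (K₁ * (K₂ * ‖h‖ / δ)) + 2 ^ N * (K₁ * ‖h‖ / δ * K₂)) * δ :=
        mul_le_mul_of_nonneg_right (add_le_add t1 t2) hδ.le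
      _ = _ := by field_simp; ring

lemma sf_taylor {n N : ℕ} {x : Euc n} {δ K : ℝ} {F : Euc n → ℝ} (hδ : 0 < δ)
    (hF : ContDiff ℝ (N : WithTop ℕ∞) F)
    (h0 : ∀ k ≤ N, ‖iteratedFDeriv ℝ k F x‖ * δ ^ k ≤ K)
    (h1 : ∀ y ∈ Metric.closedBall x δ, ∀ z ∈ Metric.closedBall x δ,
      ‖iteratedFDeriv ℝ N F z - iteratedFDeriv ℝ N F y‖ * δ ^ (N + 1) ≤ K * ‖z - y‖) :
    sfEst N x δ F ((N + 2) * K) := by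
  have hK : 0 ≤ K := le_trans (by positivity) (h0 0 (Nat.zero_le _))
  have hx := Metric.mem_closedBall_self (x := x) hδ.le
  have key : ∀ j k : ℕ, k + j = N → ∀ y ∈ Metric.closedBall x δ,
      ‖iteratedFDeriv ℝ k F y‖ * δ ^ k ≤ (j + 2) * K := by
    intro j
    induction j with
    | zero =>
      rintro k hk y hy
      obtain rfl : k = N := by omega
      have a1 := h1 x hx y hy
      have a2 := h0 k le_rfl
      have a3 := norm_le_norm_add_norm_sub' (iteratedFDeriv ℝ k F y) (iteratedFDeriv ℝ k F x)
      have a4 : ‖y - x‖ ≤ δ := by rw [← dist_eq_norm]; exact hy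
      have a5 : ‖iteratedFDeriv ℝ k F y - iteratedFDeriv ℝ k F x‖ * δ ^ k ≤ K := by
        have : ‖iteratedFDeriv ℝ k F y - iteratedFDeriv ℝ k F x‖ * δ ^ k * δ ≤ K * δ := by
          rw [mul_assoc, ← pow_succ]
          exact a1.trans (mul_le_mul_of_nonneg_left a4 hK)
        exact le_of_mul_le_mul_right this hδ
      have := mul_le_mul_of_nonneg_right a3 (by positivity : 0 ≤ δ ^ k)
      push_cast
      linarith
    | succ j ih =>
      rintro k hk y hy
      have a1 := sf_mvt (C := (j + 2) * K / δ ^ (k + 1)) hF (by omega : k < N) (fun w hw => by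
        rw [le_div_iff₀ (by positivity)]; exact ih (k + 1) (by omega) w hw) hx hy
      have a2 := h0 k (by omega)
      have a3 := norm_le_norm_add_norm_sub' (iteratedFDeriv ℝ k F y) (iteratedFDeriv ℝ k F x)
      have a4 : ‖y - x‖ ≤ δ := by rw [← dist_eq_norm]; exact hy
      have a5 : ‖iteratedFDeriv ℝ k F y - iteratedFDeriv ℝ k F x‖ * δ ^ k ≤ (j + 2) * K := by
        calc _ ≤ ((j + 2) * K / δ ^ (k + 1) * δ) * δ ^ k :=
              mul_le_mul_of_nonneg_right (a1.trans (mul_le_mul_of_nonneg_left a4 (by positivity))) (by positivity)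
          _ = _ := by field_simp; ring
      have := mul_le_mul_of_nonneg_right a3 (by positivity : 0 ≤ δ ^ k)
      push_cast
      linarith
  refine ⟨hF, fun k hk y hy => ?_, fun y hy z hz => (h1 y hy z hz).trans ?_⟩
  · refine (key (N - k) k (by omega) y hy).trans ?_
    refine mul_le_mul_of_nonneg_right ?_ hK
    have : ((N - k : ℕ) : ℝ) ≤ N := by exact_mod_cast Nat.sub_le _ _
    linarith
  · refine mul_le_mul_of_nonneg_right ?_ (norm_nonneg _)
    have : (0 : ℝ) ≤ N := by positivity
    nlinarith

/-- scaled cutoff functions -/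
lemma sf_cutoff (n N : ℕ) (c : ℝ) (hc : 0 < c) : ∃ K : ℝ, 0 ≤ K ∧ ∀ (x : Euc n) (δ : ℝ), 0 < δ →
    ∃ η : Euc n → ℝ, sfEst N x δ η K ∧ (∀ y, 0 ≤ η y) ∧ (∀ y, η y ≤ 1) ∧
      (∀ᶠ y in nhds x, η y = 1) ∧ (∀ y, c * δ ≤ ‖y - x‖ → η y = 0) := by
  let φ : ContDiffBump (0 : Euc n) := ⟨c / 2, c, by positivity, by linarith⟩
  have hφ : ∀ k : ℕ, ContDiff ℝ (k : WithTop ℕ∞) φ := fun k => φ.contDiff (n := (k : ℕ∞))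
  have hb : ∀ k : ℕ, ∃ C, ∀ y, ‖iteratedFDeriv ℝ k φ y‖ ≤ C := fun k =>
    (φ.hasCompactSupport.iteratedFDeriv k).exists_bound_of_continuous
      ((hφ k).continuous_iteratedFDeriv le_rfl)
  choose C hC using hb
  have hC0 : ∀ k, 0 ≤ C k := fun k => (norm_nonneg _).trans (hC k 0)
  set K := ∑ k ∈ Finset.range (N + 2), C k with hKdef
  have hCK : ∀ k, k ≤ N + 1 → C k ≤ K := fun k hk =>
    Finset.single_le_sum (f := C) (fun i _ => hC0 i) (Finset.mem_range.2 (by omega))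
  refine ⟨K, Finset.sum_nonneg fun i _ => hC0 i, fun x δ hδ => ?_⟩
  have cη : ∀ k : ℕ, ContDiff ℝ (k : WithTop ℕ∞) (fun y => φ (δ⁻¹ • (y - x))) := fun k =>
    (hφ k).comp ((contDiff_id.sub contDiff_const).const_smul δ⁻¹)
  have hder : ∀ k ≤ N + 1, ∀ y, ‖iteratedFDeriv ℝ k (fun y => φ (δ⁻¹ • (y - x))) y‖ * δ ^ k ≤ K := by
    intro k hk y
    have e1 := iteratedFDeriv_comp_sub (𝕜 := ℝ) (f := fun y => φ (δ⁻¹ • y)) k x y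
    have e2 := iteratedFDeriv_comp_const_smul (𝕜 := ℝ) (i := k) δ⁻¹ (hφ k)
    rw [e1, congrFun e2 (y - x), norm_smul, norm_pow, norm_inv, Real.norm_of_nonneg hδ.le]
    refine le_trans (le_of_eq ?_) ((hC k (δ⁻¹ • (y - x))).trans (hCK k hk))
    rw [mul_right_comm, ← mul_pow, inv_mul_cancel₀ hδ.ne', one_pow, one_mul]
  refine ⟨fun y => φ (δ⁻¹ • (y - x)), ⟨cη N, fun k hk y _ => hder k (by omega) y, fun y hy z hz => ?_⟩,
    fun y => φ.nonneg, fun y => φ.le_one, ?_, fun y hy => ?_⟩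
  · have := sf_mvt (x := x) (δ := δ) (C := K / δ ^ (N + 1)) (cη (N + 1)) (Nat.lt_succ_self N)
      (fun w _ => by rw [le_div_iff₀ (by positivity)]; exact hder (N + 1) le_rfl w) hy hz
    rw [← le_div_iff₀ (by positivity)]
    exact this.trans (le_of_eq (by ring))
  · have ht : Filter.Tendsto (fun y : Euc n => δ⁻¹ • (y - x)) (nhds x) (nhds 0) := by
      have : Continuous (fun y : Euc n => δ⁻¹ • (y - x)) := by fun_prop
      have := this.tendsto x
      simpa using this
    exact ht.eventually φ.eventuallyEq_one
  · apply φ.zero_of_le_dist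
    rw [dist_zero_right, norm_smul, norm_inv, Real.norm_of_nonneg hδ.le]
    change c ≤ _
    rw [inv_mul_eq_div, le_div_iff₀ hδ]
    exact hy

lemma sf_global {n N : ℕ} {x : Euc n} {δ K : ℝ} {G : Euc n → ℝ} (hδ : 0 < δ) (hδ1 : δ ≤ 1) (hK : 0 ≤ K)
    (h : sfEst N x δ G (K * δ ^ (N + 1))) (hz : ∀ y, δ / 2 ≤ ‖y - x‖ → G y = 0) :
    (∀ k ≤ N, ∀ y, ‖iteratedFDeriv ℝ k G y‖ ≤ K) ∧
    (∀ y z, ‖iteratedFDeriv ℝ N G z - iteratedFDeriv ℝ N G y‖ ≤ 2 * K * ‖z - y‖) := by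
  have zero : ∀ k y, δ / 2 < ‖y - x‖ → iteratedFDeriv ℝ k G y = 0 := by
    intro k y hy
    have : G =ᶠ[nhds y] fun _ => (0 : ℝ) := by
      have ho : IsOpen {w : Euc n | δ / 2 < ‖w - x‖} :=
        isOpen_lt continuous_const (by fun_prop)
      filter_upwards [ho.mem_nhds hy] with w hw
      exact hz w (le_of_lt hw)
    rw [(this.iteratedFDeriv ℝ k).eq_of_nhds]
    simp
  have bd : ∀ k ≤ N, ∀ y, ‖iteratedFDeriv ℝ k G y‖ ≤ K * δ := by
    intro k hk y
    by_cases hy : δ / 2 < ‖y - x‖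
    · rw [zero k y hy, norm_zero]; positivity
    · have h1 := h.2.1 k hk y (by rw [Metric.mem_closedBall, dist_eq_norm]; linarith)
      have h2 : K * δ ^ (N + 1) ≤ K * δ * δ ^ k := by
        rw [mul_assoc, ← pow_succ']
        exact mul_le_mul_of_nonneg_left (pow_le_pow_of_le_one hδ.le hδ1 (by omega)) hK
      exact le_of_mul_le_mul_right (h1.trans h2) (by positivity)
  have mixed : ∀ y z, ‖y - x‖ ≤ δ / 2 → δ < ‖z - x‖ →
      ‖iteratedFDeriv ℝ N G z - iteratedFDeriv ℝ N G y‖ ≤ 2 * K * ‖z - y‖ := by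
    intro y z hy hzz
    rw [zero N z (by linarith), zero_sub, norm_neg]
    refine (bd N le_rfl y).trans ?_
    have : ‖z - x‖ ≤ ‖z - y‖ + ‖y - x‖ := norm_sub_le_norm_sub_add_norm_sub z y x
    nlinarith
  refine ⟨fun k hk y => (bd k hk y).trans (mul_le_of_le_one_right hK hδ1), fun y z => ?_⟩
  by_cases hy : ‖y - x‖ ≤ δ <;> by_cases hzz : ‖z - x‖ ≤ δ
  · have h1 := h.2.2 y (by rwa [Metric.mem_closedBall, dist_eq_norm]) z (by rwa [Metric.mem_closedBall, dist_eq_norm])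
    have h2 : K * δ ^ (N + 1) * ‖z - y‖ = (K * ‖z - y‖) * δ ^ (N + 1) := by ring
    rw [h2] at h1
    have h3 := le_of_mul_le_mul_right h1 (by positivity)
    have : 0 ≤ K * ‖z - y‖ := by positivity
    linarith
  · by_cases hy2 : ‖y - x‖ ≤ δ / 2
    · exact mixed y z hy2 (by linarith)
    · rw [zero N z (by linarith), zero N y (by linarith)]; simp; positivity
  · by_cases hz2 : ‖z - x‖ ≤ δ / 2
    · rw [norm_sub_rev, norm_sub_rev z y]
      exact mixed z y hz2 (by linarith)
    · rw [zero N z (by linarith), zero N y (by linarith)]; simp; positivity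
  · rw [zero N z (by linarith), zero N y (by linarith)]; simp; positivity

/-! ### The main construction -/

lemma sf_lip_full {N n : ℕ} {F : Euc n → ℝ} {M : ℝ} (hM : 0 ≤ M) (h : CmLipNormLe (N + 1) n F M)
    (y z : Euc n) :
    ‖iteratedFDeriv ℝ N F z - iteratedFDeriv ℝ N F y‖ ≤ ((n : ℝ) + 1) ^ (N + 1) * M * ‖z - y‖ := by
  have hF : ContDiff ℝ (N : WithTop ℕ∞) F := h.1
  have h1 := sf_opNorm_le (iteratedFDeriv ℝ N F z - iteratedFDeriv ℝ N F y)
    (K := n * M * ‖z - y‖) (by positivity) (fun r => by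
      obtain ⟨α, hα, hr⟩ := sf_basis r
      rw [ContinuousMultilinearMap.sub_apply, hr hF, hr hF]
      exact sf_lip hM (fun i x t => h.2.2 α hα i x t) y z)
  refine h1.trans ?_
  calc (n : ℝ) ^ N * (n * M * ‖z - y‖) = (n : ℝ) ^ (N + 1) * (M * ‖z - y‖) := by ring
    _ ≤ ((n : ℝ) + 1) ^ (N + 1) * (M * ‖z - y‖) := by gcongr; linarith
    _ = _ := by ring

lemma sf_jet_bound {N n : ℕ} {F : Euc n → ℝ} (hF : ContDiff ℝ (N : WithTop ℕ∞) F) {k : ℕ} (hk : k ≤ N)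
    {x : Euc n} {K δ : ℝ} (hδ : 0 < δ) (hK : 0 ≤ K)
    (h : ∀ α : Fin n → ℕ, deg α ≤ N → |mD α F x| * δ ^ (deg α) ≤ K) :
    ‖iteratedFDeriv ℝ k F x‖ * δ ^ k ≤ ((n : ℝ) + 1) ^ (N + 1) * K := by
  have h1 := sf_opNorm_le (iteratedFDeriv ℝ k F x) (K := K / δ ^ k) (by positivity) (fun r => by
      obtain ⟨α, hα, hr⟩ := sf_basis r
      rw [hr (hF.of_le (by exact_mod_cast hk)), le_div_iff₀ (by positivity), ← hα]
      exact h α (by omega))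
  rw [← mul_div_assoc, le_div_iff₀ (by positivity)] at h1
  refine h1.trans (mul_le_mul_of_nonneg_right ?_ hK)
  calc (n : ℝ) ^ k ≤ ((n : ℝ) + 1) ^ k := by gcongr; linarith
    _ ≤ _ := pow_le_pow_right₀ (by linarith [(Nat.cast_nonneg n : (0 : ℝ) ≤ n)]) (by omega)

lemma sf_jmul_van (m : ℕ) {n : ℕ} (x : Euc n) (P Q : MPoly n) :
    sfVan (m - 1) (m - 1 + 1) x (fun y => peval P y * peval Q y - peval (jmul m n x P Q) y) := by
  have := sf_jetTrunc_van (m := m) x (P * Q)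
  simp only [sf_peval_mul] at this
  exact this

lemma sf_jmul_sq (m : ℕ) {n : ℕ} (x : Euc n) (Q : MPoly n) :
    peval (jmul m n x Q Q) x = (peval Q x) ^ 2 := by
  have h := sfVan.mD_eq (F := fun y => peval Q y * peval Q y)
    ((sf_peval_contDiff Q).mul (sf_peval_contDiff Q)) (sf_peval_contDiff _)
    (sf_jmul_van m x Q Q) (α := fun _ => 0) (by rw [sf_deg_zero]; omega)
  rw [sf_mD_zero, sf_mD_zero] at h
  rw [← h]; ring

lemma sf_mono (m n : ℕ) (f : Euc n → ℝ) (x : Euc n) {M' M : ℝ} (h : M' ≤ M) :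
    GammaF' m n f x M' ⊆ GammaF' m n f x M := by
  rintro P ⟨⟨F, hF, h0, hJ⟩, hf⟩
  exact ⟨⟨F, ⟨hF.1, fun α hα y => (hF.2.1 α hα y).trans h, fun α hα i y t =>
    (hF.2.2 α hα i y t).trans (mul_le_mul_of_nonneg_right h (abs_nonneg t))⟩, h0, hJ⟩, hf⟩

lemma sf_convex (m n : ℕ) (f : Euc n → ℝ) (x : Euc n) (M : ℝ) : Convex ℝ (GammaF' m n f x M) := by
  rintro P ⟨⟨F, hF, hF0, hFJ⟩, hPf⟩ Q ⟨⟨G, hG, hG0, hGJ⟩, hQf⟩ a b ha hb hab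
  have cF : ContDiff ℝ ((m - 1 : ℕ) : WithTop ℕ∞) F := hF.1
  have cG : ContDiff ℝ ((m - 1 : ℕ) : WithTop ℕ∞) G := hG.1
  have lin : ∀ {F G : Euc n → ℝ}, ContDiff ℝ ((m - 1 : ℕ) : WithTop ℕ∞) F →
      ContDiff ℝ ((m - 1 : ℕ) : WithTop ℕ∞) G → ∀ {α : Fin n → ℕ}, deg α ≤ m - 1 → ∀ y,
      mD α (fun z => a * F z + b * G z) y = a * mD α F y + b * mD α G y := by
    intro F G cF cG α hα y
    rw [sf_mD_add (contDiff_const.mul cF) (contDiff_const.mul cG) hα, sf_mD_smul a cF hα, sf_mD_smul b cG hα]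
  have pl : peval (a • P + b • Q) = fun z => a * peval P z + b * peval Q z := by
    funext z
    simp [peval, MvPolynomial.smul_eval]
  have cvx : ∀ {u v K : ℝ}, |u| ≤ K → |v| ≤ K → |a * u + b * v| ≤ K := by
    intro u v K hu hv
    calc |a * u + b * v| ≤ |a * u| + |b * v| := abs_add_le _ _
      _ = a * |u| + b * |v| := by rw [abs_mul, abs_mul, abs_of_nonneg ha, abs_of_nonneg hb]
      _ ≤ a * K + b * K := by gcongr
      _ = K := by rw [← add_mul, hab, one_mul]
  refine ⟨⟨fun z => a * F z + b * G z, ⟨(contDiff_const.mul cF).add (contDiff_const.mul cG), ?_, ?_⟩, ?_, ?_, ?_⟩, ?_⟩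
  · intro α hα y
    rw [lin cF cG hα]
    exact cvx (hF.2.1 α hα y) (hG.2.1 α hα y)
  · intro α hα i y t
    rw [lin cF cG hα.le, lin cF cG hα.le]
    have := cvx (hF.2.2 α hα i y t) (hG.2.2 α hα i y t)
    refine le_trans (le_of_eq ?_) this
    congr 1; ring
  · intro y
    have := hF0 y
    have := hG0 y
    positivity
  · refine (MvPolynomial.totalDegree_add _ _).trans (max_le ?_ ?_)
    · exact (MvPolynomial.totalDegree_smul_le _ _).trans hFJ.1
    · exact (MvPolynomial.totalDegree_smul_le _ _).trans hGJ.1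
  · intro α hα
    rw [pl, lin (sf_peval_contDiff P) (sf_peval_contDiff Q) hα, lin cF cG hα, hFJ.2 α hα, hGJ.2 α hα]
  · rw [pl]
    change a * peval P x + b * peval Q x = f x
    rw [hPf, hQf, ← add_mul, hab, one_mul]

set_option maxHeartbeats 2000000 in
lemma sf_core (m n : ℕ) (hm : 0 < m) : ∃ C : ℝ, 0 < C ∧ ∀ (f : Euc n → ℝ) (x : Euc n) (δ : ℝ), 0 < δ → δ ≤ 1 →
    ∀ M : ℝ, 0 < M → ∀ P₁ P₂ : MPoly n, P₁ ∈ GammaF' m n f x M → P₂ ∈ GammaF' m n f x M →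
    (∀ β : Fin n → ℕ, deg β ≤ m - 1 → |mD β (peval (P₁ - P₂)) x| ≤ M * δ ^ (m - deg β)) →
    ∀ Q₁ Q₂ : MPoly n, MvPolynomial.totalDegree Q₂ ≤ m - 1 →
    (∀ β : Fin n → ℕ, deg β ≤ m - 1 → |mD β (peval Q₂) x| ≤ δ ^ (-(deg β : ℤ))) →
    jmul m n x Q₁ Q₁ + jmul m n x Q₂ Q₂ = 1 →
    (peval Q₂ x) ^ 2 ≤ 1 / 2 →
    jmul m n x (jmul m n x Q₁ Q₁) P₁ + jmul m n x (jmul m n x Q₂ Q₂) P₂ ∈ GammaF' m n f x (C * M) := by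
  obtain ⟨N, rfl⟩ : ∃ N, m = N + 1 := ⟨m - 1, by omega⟩
  simp only [Nat.add_sub_cancel]
  set A : ℝ := ((n : ℝ) + 1) ^ (N + 1) with hA
  have hA0 : 0 < A := by positivity
  set KQ : ℝ := (N + 2) * (A * 1) with hKQ
  have hKQ0 : 0 < KQ := by positivity
  set c : ℝ := 1 / (10 * (KQ + 1)) with hcdef
  have hc0 : 0 < c := by positivity
  have hc2 : c ≤ 1 / 2 := by
    rw [hcdef, div_le_div_iff₀ (by positivity) (by norm_num)]; linarith
  have hcK : KQ * c ≤ 1 / 10 := by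
    rw [hcdef, mul_one_div, div_le_div_iff₀ (by positivity) (by norm_num)]; linarith
  obtain ⟨Kη, hKη, hcut⟩ := sf_cutoff n N c hc0
  set Kχ : ℝ := 2 ^ (N + 1) * (Kη * (2 ^ (N + 1) * (KQ * KQ))) with hKχ
  have hKχ0 : 0 ≤ Kχ := by positivity
  set K' : ℝ := 2 ^ (N + 1) * (Kχ * ((N + 2) * (2 * A))) with hK'
  have hK'0 : 0 ≤ K' := by positivity
  refine ⟨1 + 2 * K', by positivity, ?_⟩
  rintro f x δ hδ hδ1 M hM P₁ P₂ ⟨⟨F₁, hF₁, hF₁0, hJ₁⟩, hP₁f⟩ ⟨⟨F₂, hF₂, hF₂0, hJ₂⟩, hP₂f⟩ hP Q₁ Q₂ hQd hQ hsum hQ2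
  obtain ⟨η, hηE, hη0, hη1, hηx, hηz⟩ := hcut x δ hδ
  have cF₁ : ContDiff ℝ (N : WithTop ℕ∞) F₁ := hF₁.1
  have cF₂ : ContDiff ℝ (N : WithTop ℕ∞) F₂ := hF₂.1
  have cP : ∀ P : MPoly n, ContDiff ℝ (N : WithTop ℕ∞) (peval P) := fun P => sf_peval_contDiff P
  have hJ₁' : ∀ α : Fin n → ℕ, deg α ≤ N → mD α (peval P₁) x = mD α F₁ x := hJ₁.2
  have hJ₂' : ∀ α : Fin n → ℕ, deg α ≤ N → mD α (peval P₂) x = mD α F₂ x := hJ₂.2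
  -- estimates for `F₂ - F₁`
  have hΔ : sfEst N x δ (fun y => F₂ y - F₁ y) ((N + 2) * (2 * A * M * δ ^ (N + 1))) := by
    apply sf_taylor hδ (cF₂.sub cF₁)
    · intro k hk
      have := sf_jet_bound (cF₂.sub cF₁) hk (x := x) (K := M * δ ^ (N + 1)) hδ (by positivity) (fun α hα => by
        have h1 := hP α hα
        have e : peval (P₁ - P₂) = fun y => peval P₁ y - peval P₂ y := by
          funext y; exact sf_peval_sub _ _ _
        rw [e, sf_mD_sub (cP P₁) (cP P₂) hα, hJ₁' α hα, hJ₂' α hα, abs_sub_comm] at h1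
        rw [sf_mD_sub cF₂ cF₁ hα]
        calc _ ≤ M * δ ^ (N + 1 - deg α) * δ ^ deg α := mul_le_mul_of_nonneg_right h1 (by positivity)
          _ = _ := by rw [mul_assoc, ← pow_add]; congr 2; omega)
      refine this.trans ?_
      rw [← hA]
      have : 0 ≤ A * (M * δ ^ (N + 1)) := by positivity
      linarith
    · intro y _ z _
      have l1 := sf_lip_full hM.le hF₁ y z
      have l2 := sf_lip_full hM.le hF₂ y z
      have e : ∀ w, iteratedFDeriv ℝ N (fun y => F₂ y - F₁ y) w = iteratedFDeriv ℝ N F₂ w - iteratedFDeriv ℝ N F₁ w :=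
        fun w => iteratedFDeriv_sub_apply (x := w) cF₂.contDiffAt cF₁.contDiffAt
      rw [e, e]
      have e2 : iteratedFDeriv ℝ N F₂ z - iteratedFDeriv ℝ N F₁ z - (iteratedFDeriv ℝ N F₂ y - iteratedFDeriv ℝ N F₁ y)
        = (iteratedFDeriv ℝ N F₂ z - iteratedFDeriv ℝ N F₂ y) - (iteratedFDeriv ℝ N F₁ z - iteratedFDeriv ℝ N F₁ y) := by
        abel
      rw [e2]
      have := norm_sub_le (iteratedFDeriv ℝ N F₂ z - iteratedFDeriv ℝ N F₂ y) (iteratedFDeriv ℝ N F₁ z - iteratedFDeriv ℝ N F₁ y)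
      calc _ ≤ (2 * (A * M * ‖z - y‖)) * δ ^ (N + 1) :=
            mul_le_mul_of_nonneg_right (by linarith) (by positivity)
        _ = _ := by ring
  -- estimates for `Q₂`
  have hQE : sfEst N x δ (peval Q₂) KQ := by
    apply sf_taylor hδ (cP Q₂)
    · intro k hk
      refine sf_jet_bound (cP Q₂) hk hδ zero_le_one (fun α hα => ?_)
      have h1 := hQ α hα
      rw [zpow_neg, zpow_natCast, ← one_div, le_div_iff₀ (by positivity)] at h1
      exact h1
    · intro y hy z hz
      have h1 : ‖iteratedFDeriv ℝ N (peval Q₂) z - iteratedFDeriv ℝ N (peval Q₂) y‖ ≤ 0 * ‖z - y‖ :=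
        sf_mvt (N := N + 1) (sf_peval_contDiff Q₂) (Nat.lt_succ_self N) (fun w _ => by
          rw [sf_poly_high Q₂ hQd (N + 1) (Nat.lt_succ_self N) w, norm_zero]) hy hz
      rw [zero_mul] at h1
      have h2 : ‖iteratedFDeriv ℝ N (peval Q₂) z - iteratedFDeriv ℝ N (peval Q₂) y‖ = 0 :=
        le_antisymm h1 (norm_nonneg _)
      rw [h2, zero_mul]
      positivity
  have hχE := hηE.mul hδ (hQE.mul hδ hQE)
  have hGE := hχE.mul hδ hΔ
  set χ : Euc n → ℝ := fun y => η y * (peval Q₂ y * peval Q₂ y) with hχ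
  set G : Euc n → ℝ := fun y => χ y * (F₂ y - F₁ y) with hG
  have hGE' : sfEst N x δ G ((K' * M) * δ ^ (N + 1)) := by
    refine hGE.mono (le_of_eq ?_)
    rw [hK', hKχ]; ring
  have hχ0 : ∀ y, 0 ≤ χ y := fun y => mul_nonneg (hη0 y) (mul_self_nonneg _)
  have hχ1 : ∀ y, χ y ≤ 1 := by
    intro y
    by_cases hy : c * δ ≤ ‖y - x‖
    · simp [hχ, hηz y hy]
    · push Not at hy
      have hyB : y ∈ Metric.closedBall x δ := by
        rw [Metric.mem_closedBall, dist_eq_norm]; nlinarith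
      have h1 := hQE.lip hδ (Nat.zero_le _) (Metric.mem_closedBall_self hδ.le) hyB
      have h2 := sf_mD_sub_le (α := fun _ => 0) (cP Q₂) (by rw [sf_deg_zero]; omega) y x
      rw [sf_mD_zero, sf_deg_zero] at h2
      have h3 : |peval Q₂ y - peval Q₂ x| ≤ 1 / 10 := by
        have : |peval Q₂ y - peval Q₂ x| * δ ≤ 1 / 10 * δ := by
          calc _ ≤ _ := mul_le_mul_of_nonneg_right h2 hδ.le
            _ ≤ KQ * ‖y - x‖ := by simpa using h1
            _ ≤ KQ * (c * δ) := mul_le_mul_of_nonneg_left hy.le hKQ0.le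
            _ = KQ * c * δ := by ring
            _ ≤ _ := mul_le_mul_of_nonneg_right hcK hδ.le
        exact le_of_mul_le_mul_right this hδ
      have h4 : |peval Q₂ x| ≤ 8 / 10 := abs_le.2 ⟨by nlinarith, by nlinarith⟩
      have h5 : |peval Q₂ y| ≤ 1 := by
        have := abs_sub_abs_le_abs_sub (peval Q₂ y) (peval Q₂ x)
        linarith
      have h6 : peval Q₂ y * peval Q₂ y ≤ 1 := by
        rw [← abs_mul_abs_self]; nlinarith [abs_nonneg (peval Q₂ y)]
      exact mul_le_one₀ (hη1 y) (mul_self_nonneg _) h6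
  obtain ⟨hG1, hG2⟩ := sf_global hδ hδ1 (by positivity) hGE' (fun y hy => by
    have : η y = 0 := hηz y (by nlinarith)
    simp [hG, hχ, this])
  have cG : ContDiff ℝ (N : WithTop ℕ∞) G := hGE.1
  have cF : ContDiff ℝ (N : WithTop ℕ∞) (fun y => F₁ y + G y) := cF₁.add cG
  have hsN : ∀ y, peval (jmul (N + 1) n x Q₁ Q₁) y = 1 - peval (jmul (N + 1) n x Q₂ Q₂) y := by
    intro y
    have := congrArg (fun P => peval P y) hsum
    simp only [sf_peval_add, sf_peval_one] at this
    linarith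
  -- the jet identity
  have hjet : ∀ α : Fin n → ℕ, deg α ≤ N →
      mD α (peval (jmul (N + 1) n x (jmul (N + 1) n x Q₁ Q₁) P₁ + jmul (N + 1) n x (jmul (N + 1) n x Q₂ Q₂) P₂)) x
        = mD α (fun y => F₁ y + G y) x := by
    intro α hα
    refine sfVan.mD_eq (cP _) cF ?_ hα
    have a2 : sfVan N (N + 1) x _ := sf_jmul_van (N + 1) x Q₂ Q₂
    have b1 : sfVan N (N + 1) x _ := sf_jmul_van (N + 1) x (jmul (N + 1) n x Q₁ Q₁) P₁
    have b2 : sfVan N (N + 1) x _ := sf_jmul_van (N + 1) x (jmul (N + 1) n x Q₂ Q₂) P₂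
    have d1 : sfVan N (N + 1) x _ := sfVan.of_mD_eq (cP P₁) cF₁ hJ₁'
    have d2 : sfVan N (N + 1) x _ := sfVan.of_mD_eq (cP P₂) cF₂ hJ₂'
    have w : sfVan N (N + 1) x (fun y => η y - 1) := by
      refine ⟨hηE.1.sub contDiff_const, fun k _ _ => ?_⟩
      have : (fun y => η y - 1) =ᶠ[nhds x] fun _ => (0 : ℝ) := by
        filter_upwards [hηx] with y hy
        rw [hy, sub_self]
      rw [(this.iteratedFDeriv ℝ k).eq_of_nhds]
      simp
    have t := ((((b1.neg.add b2.neg).add (d1.mulr (cP (jmul (N + 1) n x Q₁ Q₁)))).add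
      (d2.mulr (cP (jmul (N + 1) n x Q₂ Q₂)))).add (a2.neg.mulr (cF₂.sub cF₁))).add
      ((w.neg.mulr ((cP Q₂).mul (cP Q₂))).mulr (cF₂.sub cF₁))
    convert t using 1
    funext y
    simp only [hG, hχ, sf_peval_add, hsN]
    ring
  have hF₁x : F₁ x = f x := by
    have := hJ₁' (fun _ => 0) (by rw [sf_deg_zero]; omega)
    rw [sf_mD_zero, sf_mD_zero, hP₁f] at this
    exact this.symm
  have hF₂x : F₂ x = f x := by
    have := hJ₂' (fun _ => 0) (by rw [sf_deg_zero]; omega)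
    rw [sf_mD_zero, sf_mD_zero, hP₂f] at this
    exact this.symm
  refine ⟨⟨fun y => F₁ y + G y, ⟨cF, ?_, ?_⟩, ?_, ?_, hjet⟩, ?_⟩
  · intro α hα y
    rw [sf_mD_add cF₁ cG hα]
    have h1 := hF₁.2.1 α hα y
    have h2 := (sf_mD_le cG hα y).trans (hG1 _ hα y)
    have h3 := abs_add_le (mD α F₁ y) (mD α G y)
    have : 0 ≤ K' * M := by positivity
    nlinarith
  · intro α hα i y t
    have hα' : deg α = N := hα
    rw [sf_mD_add cF₁ cG hα'.le, sf_mD_add cF₁ cG hα'.le]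
    have h1 := hF₁.2.2 α hα i y t
    have h2 := sf_mD_sub_le cG hα'.le (y + t • EuclideanSpace.single i (1 : ℝ)) y
    rw [hα'] at h2
    have h3 := h2.trans (hG2 y (y + t • EuclideanSpace.single i (1 : ℝ)))
    have h4 : ‖y + t • EuclideanSpace.single i (1 : ℝ) - y‖ = |t| := by
      rw [add_sub_cancel_left, norm_smul]; simp
    rw [h4] at h3
    have h5 := abs_add_le (mD α F₁ (y + t • EuclideanSpace.single i (1 : ℝ)) - mD α F₁ y)
      (mD α G (y + t • EuclideanSpace.single i (1 : ℝ)) - mD α G y)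
    have e : ∀ a b c d : ℝ, a + b - (c + d) = (a - c) + (b - d) := fun a b c d => by ring
    rw [e]
    linarith
  · intro y
    have e : F₁ y + G y = (1 - χ y) * F₁ y + χ y * F₂ y := by simp only [hG]; ring
    change 0 ≤ F₁ y + G y
    rw [e]
    exact add_nonneg (mul_nonneg (by linarith [hχ1 y]) (hF₁0 y)) (mul_nonneg (hχ0 y) (hF₂0 y))
  · exact (MvPolynomial.totalDegree_add _ _).trans (max_le (sf_jetTrunc_deg _ _) (sf_jetTrunc_deg _ _))
  · have := hjet (fun _ => 0) (by rw [sf_deg_zero]; omega)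
    rw [sf_mD_zero, sf_mD_zero] at this
    rw [this]
    simp only [hG, hF₁x, hF₂x]
    ring

/-- **Lemma 4.1**: `Γ⃗'_f` is a `(C,1)`-convex shape field. -/
theorem GammaF'_is_convex_shape_field (m n : ℕ) (hm : 0 < m) (hn : 0 < n) :
    ∃ C : ℝ, 0 < C ∧
      ∀ (E : Set (Euc n)), E.Finite → ∀ f : Euc n → ℝ, (∀ x ∈ E, 0 ≤ f x) →
        (∀ x ∈ E, ∀ M : ℝ, 0 < M → Convex ℝ (GammaF' m n f x M)) ∧
        (∀ x ∈ E, ∀ M' M : ℝ, 0 < M' → M' ≤ M → GammaF' m n f x M' ⊆ GammaF' m n f x M) ∧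
        (∀ δ : ℝ, 0 < δ → δ ≤ 1 → ∀ x ∈ E, ∀ M : ℝ, 0 < M →
          ∀ P₁ ∈ GammaF' m n f x M, ∀ P₂ ∈ GammaF' m n f x M,
          (∀ β : Fin n → ℕ, deg β ≤ m - 1 →
            |mD β (peval (P₁ - P₂)) x| ≤ M * δ ^ (m - deg β)) →
          ∀ Q₁ Q₂ : MPoly n,
            MvPolynomial.totalDegree Q₁ ≤ m - 1 → MvPolynomial.totalDegree Q₂ ≤ m - 1 →
          (∀ β : Fin n → ℕ, deg β ≤ m - 1 →
            |mD β (peval Q₁) x| ≤ δ ^ (-(deg β : ℤ)) ∧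
            |mD β (peval Q₂) x| ≤ δ ^ (-(deg β : ℤ))) →
          jmul m n x Q₁ Q₁ + jmul m n x Q₂ Q₂ = 1 →
          jmul m n x (jmul m n x Q₁ Q₁) P₁ + jmul m n x (jmul m n x Q₂ Q₂) P₂
            ∈ GammaF' m n f x (C * M)) := by
  obtain ⟨C, hC0, hC⟩ := sf_core m n hm
  refine ⟨C, hC0, fun E _ f _ => ⟨fun x _ M _ => sf_convex m n f x M,
    fun x _ M' M _ h => sf_mono m n f x h, ?_⟩⟩
  intro δ hδ hδ1 x _ M hM P₁ hP₁ P₂ hP₂ hP Q₁ Q₂ hQ₁ hQ₂ hQ hsum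
  have hs : (peval Q₁ x) ^ 2 + (peval Q₂ x) ^ 2 = 1 := by
    rw [← sf_jmul_sq m x Q₁, ← sf_jmul_sq m x Q₂, ← sf_peval_add, hsum, sf_peval_one]
  by_cases h : (peval Q₂ x) ^ 2 ≤ 1 / 2
  · exact hC f x δ hδ hδ1 M hM P₁ P₂ hP₁ hP₂ hP Q₁ Q₂ hQ₂ (fun β hβ => (hQ β hβ).2) hsum h
  · rw [add_comm]
    refine hC f x δ hδ hδ1 M hM P₂ P₁ hP₂ hP₁ ?_ Q₂ Q₁ hQ₁ (fun β hβ => (hQ β hβ).1)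
      (by rw [add_comm]; exact hsum) (by linarith)
    intro β hβ
    have e : peval (P₂ - P₁) = fun y => (-1) * peval (P₁ - P₂) y := by
      funext y; rw [sf_peval_sub, sf_peval_sub]; ring
    rw [e, sf_mD_smul (-1) (sf_peval_contDiff (N := ((m - 1 : ℕ) : WithTop ℕ∞)) (P₁ - P₂)) hβ x,
      abs_mul]
    simpa using hP β hβ

end
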